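/- Suppose G is recurrent. Then for every vertex v with q_0(v) > 0, one has Σ_u deg(u) · q_last(u, v) = ∞, where the sum is over all vertices u of G. -/

import Mathlib

open MeasureTheory
open scoped ENNReal Classical

namespace CollisionsStmt

variable {V : Type*}

/-- One-step transition probabilities of the simple random walk on `G`:
`p(u,v) = 1/deg u` if `v` is adjacent to `u`, and `0` otherwise. -/
noncomputable def step (G : SimpleGraph V) [G.LocallyFinite] (u v : V) : ℝ≥0∞ :=
  if G.Adj u v then ((G.degree u : ℝ≥0∞))⁻¹ else 0

/-- The `n`-step transition probabilities of the simple random walk on `G`. -/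
noncomputable def pn (G : SimpleGraph V) [G.LocallyFinite] : ℕ → V → V → ℝ≥0∞
  | 0, u, v => if u = v then 1 else 0
  | n + 1, u, v => ∑' w, step G u w * pn G n w v

/-- `μ` is the law (on path space, via the Ionescu–Tulcea trajectory construction) of
two independent walks with one-step transition probabilities `p`, started at `a` and `b`
respectively; equivalently, the Markov chain on `V × V` with kernel `p ⊗ p` started at `(a, b)`.
The law is characterized by being a probability measure with the prescribed
finite-dimensional (cylinder) distributions. -/
def IsPairWalkMeasure [MeasurableSpace V] (p : V → V → ℝ≥0∞) (a b : V)
    (μ : Measure (ℕ → V × V)) : Prop :=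
  IsProbabilityMeasure μ ∧
    ∀ (n : ℕ) (x : ℕ → V × V),
      μ {ω | ∀ i ≤ n, ω i = x i} =
        (if x 0 = (a, b) then (1 : ℝ≥0∞) else 0) *
          ∏ i ∈ Finset.range n, (p (x i).1 (x (i + 1)).1 * p (x i).2 (x (i + 1)).2)

/-- The event that the two walks do not collide at any time `n ≥ 1`. -/
def noCollision : Set (ℕ → V × V) := {ω | ∀ n ≥ 1, (ω n).1 ≠ (ω n).2}

/-- The event that the two walks have their last collision at the vertex `v`: for some
`n ≥ 0`, `X_n = Y_n = v` and `X_m ≠ Y_m` for all `m > n`. -/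
def lastCollisionAt (v : V) : Set (ℕ → V × V) :=
  {ω | ∃ n : ℕ, ω n = (v, v) ∧ ∀ m > n, (ω m).1 ≠ (ω m).2}

/-- The event that the two walks collide at only finitely many times. -/
def finCollisions : Set (ℕ → V × V) := {ω | {n : ℕ | (ω n).1 = (ω n).2}.Finite}

/-- The event that the two walks collide at infinitely many times. -/
def infCollisions : Set (ℕ → V × V) := {ω | {n : ℕ | (ω n).1 = (ω n).2}.Infinite}

/-- The event that the two walks never collide (including at time `0`). -/
def neverCollide : Set (ℕ → V × V) := {ω | ∀ n : ℕ, (ω n).1 ≠ (ω n).2}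

/-!
If `m` is a reversing measure of the walk, such as the degree for the simple random walk, then
`Σ_u m(u) · q_last(u, v) = m(v) · (Σ_n p_{2n}(v, v)) · q_0(v)`: the last collision happens at `v` at
time `n` with probability `p_n(u, v)² · q_0(v)` by the Markov property, and reversibility
`m(u) · p_n(u, v) = m(v) · p_n(v, u)` turns one of the two factors `p_n(u, v)` around. At a
recurrent `v` the even-time return probabilities have infinite sum: otherwise the odd-time ones do,
so some odd time has positive return probability, and appending such a return to all the odd ones
makes the even-time sum infinite after all.
-/

section TransitionProbabilities

variable {S T : Type*}

/-- The `n`-step transition probabilities of a transition function `P`, generalizing `pn` from the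
simple random walk. -/
noncomputable def nStep (P : S → S → ℝ≥0∞) : ℕ → S → S → ℝ≥0∞
  | 0, s, t => if s = t then 1 else 0
  | n + 1, s, t => ∑' w, P s w * nStep P n w t

/-- The transition function of two independent chains with transition functions `P` and `Q`. -/
noncomputable def prodStep (P : S → S → ℝ≥0∞) (Q : T → T → ℝ≥0∞) (z w : S × T) : ℝ≥0∞ :=
  P z.1 w.1 * Q z.2 w.2

variable (P : S → S → ℝ≥0∞) (Q : T → T → ℝ≥0∞)

lemma nStep_add (m n : ℕ) (s t : S) :
    nStep P (m + n) s t = ∑' w, nStep P m s w * nStep P n w t := by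
  induction m generalizing s with
  | zero => simp [nStep]
  | succ m ih =>
    rw [Nat.add_right_comm]
    simp only [nStep, ih, ← ENNReal.tsum_mul_left, ← ENNReal.tsum_mul_right]
    rw [ENNReal.tsum_comm]
    simp only [mul_assoc]

lemma nStep_one (s t : S) : nStep P 1 s t = P s t := by
  simp [nStep]

lemma nStep_succ (n : ℕ) (s t : S) : nStep P (n + 1) s t = ∑' w, nStep P n s w * P w t := by
  simp only [nStep_add, nStep_one]

lemma nStep_mul_nStep_le (m n : ℕ) (s w t : S) :
    nStep P m s w * nStep P n w t ≤ nStep P (m + n) s t :=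
  (ENNReal.le_tsum w).trans_eq (nStep_add P m n s t).symm

lemma nStep_prodStep (n : ℕ) (z w : S × T) :
    nStep (prodStep P Q) n z w = nStep P n z.1 w.1 * nStep Q n z.2 w.2 := by
  induction n generalizing z with
  | zero => simp only [nStep, Prod.ext_iff, ite_and, ite_zero_mul, one_mul]
  | succ n ih =>
    simp only [nStep, ih, prodStep, ENNReal.tsum_prod', ← ENNReal.tsum_mul_left,
      ← ENNReal.tsum_mul_right, mul_mul_mul_comm]
    rw [ENNReal.tsum_comm]

lemma tsum_nStep_even_eq_top {s : S} (hrec : ∑' n, nStep P n s s = ∞) :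
    ∑' n, nStep P (2 * n) s s = ∞ := by
  by_contra heven
  have hodd : ∑' n, nStep P (2 * n + 1) s s = ∞ := by
    rw [← tsum_even_add_odd ENNReal.summable ENNReal.summable] at hrec
    exact (ENNReal.add_eq_top.1 hrec).resolve_left heven
  obtain ⟨k, hk⟩ : ∃ k, nStep P (2 * k + 1) s s ≠ 0 := by
    by_contra! hzero
    simp [hzero] at hodd
  have hle : (∑' n, nStep P (2 * n + 1) s s) * nStep P (2 * k + 1) s s ≤
      ∑' n, nStep P (2 * n) s s :=
    calc (∑' n, nStep P (2 * n + 1) s s) * nStep P (2 * k + 1) s s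
        = ∑' n, nStep P (2 * n + 1) s s * nStep P (2 * k + 1) s s := ENNReal.tsum_mul_right.symm
      _ ≤ ∑' n, nStep P (2 * (n + (k + 1))) s s :=
          ENNReal.tsum_le_tsum fun n => (nStep_mul_nStep_le P _ _ s s s).trans_eq (by ring_nf)
      _ ≤ ∑' n, nStep P (2 * n) s s :=
          ENNReal.tsum_comp_le_tsum_of_injective (add_left_injective (k + 1)) _
  rw [hodd, ENNReal.top_mul hk, top_le_iff] at hle
  exact heven hle

section Reversible

variable {P} {m : S → ℝ≥0∞} (hrev : ∀ s t, m s * P s t = m t * P t s)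
include hrev

lemma mul_nStep_comm (n : ℕ) (s t : S) : m s * nStep P n s t = m t * nStep P n t s := by
  induction n generalizing s with
  | zero =>
    obtain rfl | h := eq_or_ne s t
    · rfl
    · simp [nStep, h, h.symm]
  | succ n ih =>
    rw [nStep_succ P n t]
    simp only [nStep, ← ENNReal.tsum_mul_left]
    refine tsum_congr fun w => ?_
    calc m s * (P s w * nStep P n w t)
        = m w * nStep P n w t * P w s := by rw [← mul_assoc, hrev]; ring
      _ = m t * (nStep P n t w * P w s) := by rw [ih, mul_assoc]

lemma tsum_mul_nStep_sq (n : ℕ) (t : S) :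
    ∑' s, m s * nStep P n s t ^ 2 = m t * nStep P (2 * n) t t := by
  rw [two_mul, nStep_add, ← ENNReal.tsum_mul_left]
  refine tsum_congr fun s => ?_
  rw [sq, ← mul_assoc, mul_nStep_comm hrev, mul_assoc]

end Reversible

end TransitionProbabilities

section PathSpace

variable {S : Type*}

/-- The cylinder of paths that agree with `x` up to and including time `n`. -/
def pathCylinder (n : ℕ) (x : ℕ → S) : Set (ℕ → S) := {ω | ∀ i ≤ n, ω i = x i}

/-- The future of the path `ω` from time `n` on. -/
def pathShift (n : ℕ) (ω : ℕ → S) : ℕ → S := fun i => ω (n + i)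

/-- The event that a path does not visit `C` at any time `n ≥ 1`. -/
def noReturn (C : Set S) : Set (ℕ → S) := {ω | ∀ n ≥ 1, ω n ∉ C}

/-- The event that a path is at `w` at some time and does not visit `C` afterwards; for `w ∈ C` this
says that the last visit to `C` takes place at `w`. -/
def lastVisitAt (C : Set S) (w : S) : Set (ℕ → S) := {ω | ∃ n, ω n = w ∧ ∀ m > n, ω m ∉ C}

lemma preimage_frestrictLe_singleton (n : ℕ) (x : ℕ → S) :
    Preorder.frestrictLe (π := fun _ => S) n ⁻¹' {Preorder.frestrictLe n x} = pathCylinder n x := by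
  ext ω
  simp [pathCylinder, funext_iff]

lemma exists_frestrictLe_eq {n : ℕ} (s : Finset.Iic n → S) :
    ∃ x : ℕ → S, Preorder.frestrictLe n x = s :=
  ⟨fun i => s ⟨min i n, by simp⟩, by ext ⟨i, hi⟩; simp [Finset.mem_Iic.1 hi]⟩

lemma pathCylinder_eq_of_mem {n : ℕ} {x z : ℕ → S} (hz : z ∈ pathCylinder n x) :
    pathCylinder n x = pathCylinder n z :=
  Set.ext fun _ => forall₂_congr fun i hi => by rw [hz i hi]

lemma pathCylinder_succ (n : ℕ) (x : ℕ → S) :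
    pathCylinder (n + 1) x = pathCylinder n x ∩ {ω | ω (n + 1) = x (n + 1)} := by
  ext ω
  simp only [pathCylinder, Set.mem_inter_iff, Set.mem_ofPred_eq, Nat.le_succ_iff, or_imp,
    forall_and, forall_eq]

lemma pathCylinder_add (n m : ℕ) (z : ℕ → S) :
    pathCylinder (n + m) z =
      pathCylinder n z ∩ pathShift n ⁻¹' pathCylinder m (pathShift n z) := by
  ext ω
  refine ⟨fun h => ⟨fun i hi => h i (by lia), fun i hi => h (n + i) (by lia)⟩, ?_⟩
  rintro ⟨hpast, hfuture⟩ i hi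
  obtain hin | hin := le_total i n
  · exact hpast i hin
  · obtain ⟨j, rfl⟩ := Nat.exists_eq_add_of_le hin
    exact hfuture j (by lia)

lemma exists_mem_pathCylinder_pathShift_eq {n : ℕ} {x y : ℕ → S} (hxy : y 0 = x n) :
    ∃ z ∈ pathCylinder n x, pathShift n z = y := by
  refine ⟨fun i => if i ≤ n then x i else y (i - n), fun i hi => if_pos hi, ?_⟩
  ext (_ | i) <;> simp [pathShift, hxy]

lemma lastVisitAt_eq_iUnion (C : Set S) (w : S) :
    lastVisitAt C w = ⋃ n, {ω | ω n = w} ∩ pathShift n ⁻¹' noReturn C := by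
  ext ω
  simp only [lastVisitAt, noReturn, pathShift, Set.mem_iUnion, Set.mem_inter_iff,
    Set.mem_preimage, Set.mem_ofPred_eq]
  refine exists_congr fun n => and_congr_right fun _ => ⟨fun h i hi => h _ (by lia), ?_⟩
  intro h k hk
  simpa [Nat.add_sub_cancel' hk.le] using h (k - n) (by lia)

lemma pairwise_disjoint_lastVisit {C : Set S} {w : S} (hw : w ∈ C) :
    Pairwise (Function.onFun Disjoint
      fun n => {ω : ℕ → S | ω n = w} ∩ pathShift n ⁻¹' noReturn C) := by
  refine (pairwise_disjoint_on _).2 fun i j hij => Set.disjoint_left.2 ?_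
  rintro ω ⟨-, hi⟩ ⟨hj : ω j = w, -⟩
  refine hi (j - i) (by lia) ?_
  rwa [pathShift, Nat.add_sub_cancel' hij.le, hj]

variable [MeasurableSpace S]

lemma measurable_pathShift (n : ℕ) : Measurable (pathShift (S := S) n) :=
  measurable_pi_lambda _ fun _ => measurable_pi_apply _

lemma measurableSet_noReturn {C : Set S} (hC : MeasurableSet C) : MeasurableSet (noReturn C) := by
  have heq : noReturn C = ⋂ n ≥ 1, (fun ω : ℕ → S => ω n) ⁻¹' Cᶜ := by
    ext
    simp [noReturn]
  rw [heq]
  exact .iInter fun n => .iInter fun _ => measurable_pi_apply n hC.compl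

variable [MeasurableSingletonClass S]

lemma measurableSet_eval_eq (n : ℕ) (w : S) : MeasurableSet {ω : ℕ → S | ω n = w} := by
  have heval : Measurable fun ω : ℕ → S => ω n := measurable_pi_apply n
  exact heval (measurableSet_singleton w)

lemma measurableSet_pathCylinder (n : ℕ) (x : ℕ → S) : MeasurableSet (pathCylinder n x) := by
  rw [← preimage_frestrictLe_singleton]
  exact Preorder.measurable_frestrictLe n (measurableSet_singleton _)

variable [Countable S]

lemma map_frestrictLe_congr {μ ν : Measure (ℕ → S)} {n : ℕ}
    (h : ∀ x, μ (pathCylinder n x) = ν (pathCylinder n x)) :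
    μ.map (Preorder.frestrictLe n) = ν.map (Preorder.frestrictLe n) := by
  refine Measure.ext_of_singleton fun s => ?_
  obtain ⟨x, rfl⟩ := exists_frestrictLe_eq s
  simpa only [Measure.map_apply (Preorder.measurable_frestrictLe n) (measurableSet_singleton _),
    preimage_frestrictLe_singleton] using h x

lemma ext_of_pathCylinder {μ ν : Measure (ℕ → S)} [IsFiniteMeasure μ]
    (h : ∀ n x, μ (pathCylinder n x) = ν (pathCylinder n x)) : μ = ν := by
  refine IsProjectiveLimit.unique (P := fun I => μ.map I.restrict) (fun I => rfl) fun I => ?_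
  have hI : I ⊆ Finset.Iic (I.sup id) := fun i hi => Finset.mem_Iic.2 (Finset.le_sup (f := id) hi)
  have hmap (ρ : Measure (ℕ → S)) : ρ.map I.restrict =
      (ρ.map (Preorder.frestrictLe (π := fun _ => S) (I.sup id))).map
        (Finset.restrict₂ (π := fun _ => S) hI) :=
    (Measure.map_map (Finset.measurable_restrict₂ hI) (Preorder.measurable_frestrictLe _)).symm
  change ν.map I.restrict = μ.map I.restrict
  rw [hmap, hmap, map_frestrictLe_congr (h _)]

lemma measure_eval_eq_inter_eq_mul_of_forall_pathCylinder {μ : Measure (ℕ → S)} {n : ℕ} {w : S}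
    {B : Set (ℕ → S)} {c : ℝ≥0∞}
    (h : ∀ x, x n = w → μ (pathCylinder n x ∩ B) = μ (pathCylinder n x) * c) :
    μ ({ω | ω n = w} ∩ B) = μ {ω | ω n = w} * c := by
  have hmap : (μ.restrict ({ω | ω n = w} ∩ B)).map (Preorder.frestrictLe n) =
      (c • μ.restrict {ω | ω n = w}).map (Preorder.frestrictLe n) := by
    refine map_frestrictLe_congr fun x => ?_
    rw [Measure.smul_apply, Measure.restrict_apply (measurableSet_pathCylinder n x),
      Measure.restrict_apply (measurableSet_pathCylinder n x), ← Set.inter_assoc, smul_eq_mul]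
    by_cases hx : x n = w
    · have hsub : pathCylinder n x ⊆ {ω | ω n = w} := fun ω hω => (hω n le_rfl).trans hx
      rw [Set.inter_eq_left.2 hsub, h x hx, mul_comm]
    · have hdisj : pathCylinder n x ∩ {ω | ω n = w} = ∅ :=
        Set.eq_empty_of_forall_notMem fun ω hω => hx ((hω.1 n le_rfl).symm.trans hω.2)
      simp [hdisj]
  have huniv := DFunLike.congr_fun hmap Set.univ
  rw [Measure.map_apply (Preorder.measurable_frestrictLe n) .univ,
    Measure.map_apply (Preorder.measurable_frestrictLe n) .univ] at huniv
  simpa [mul_comm] using huniv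

lemma tsum_measure_eval_eq_inter (μ : Measure (ℕ → S)) (n : ℕ) (A : Set (ℕ → S)) :
    ∑' w, μ ({ω | ω n = w} ∩ A) = μ A := by
  have hsum := tsum_measure_preimage_singleton (μ := μ.restrict A) (f := fun ω : ℕ → S => ω n)
    Set.countable_univ fun w _ => measurableSet_eval_eq n w
  rw [tsum_univ fun w => μ.restrict A ((fun ω : ℕ → S => ω n) ⁻¹' {w}), Set.preimage_univ,
    Measure.restrict_apply_univ] at hsum
  rw [← hsum]
  exact tsum_congr fun w => (Measure.restrict_apply (measurableSet_eval_eq n w)).symm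

end PathSpace

section MarkovChain

variable {S : Type*} [MeasurableSpace S]

/-- `μ` is the law on path space of the Markov chain on `S` with transition function `P` started at
`s`, characterized by its cylinder probabilities. -/
structure IsChainLaw (P : S → S → ℝ≥0∞) (s : S) (μ : Measure (ℕ → S)) : Prop where
  isProbabilityMeasure : IsProbabilityMeasure μ
  measure_pathCylinder (n : ℕ) (x : ℕ → S) : μ (pathCylinder n x) =
    (if x 0 = s then 1 else 0) * ∏ i ∈ Finset.range n, P (x i) (x (i + 1))

namespace IsChainLaw

variable {P : S → S → ℝ≥0∞} {s t : S} {μ ν : Measure (ℕ → S)}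

lemma measure_pathCylinder_succ (hμ : IsChainLaw P s μ) (n : ℕ) (x : ℕ → S) :
    μ (pathCylinder (n + 1) x) = μ (pathCylinder n x) * P (x n) (x (n + 1)) := by
  simp only [hμ.measure_pathCylinder, Finset.prod_range_succ, mul_assoc]

lemma measure_pathCylinder_inter_pathShift (hμ : IsChainLaw P s μ) (hν : IsChainLaw P t ν)
    {n : ℕ} {x : ℕ → S} (hx : x n = t) (m : ℕ) (y : ℕ → S) :
    μ (pathCylinder n x ∩ pathShift n ⁻¹' pathCylinder m y) =
      μ (pathCylinder n x) * ν (pathCylinder m y) := by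
  by_cases hy : y 0 = t
  · obtain ⟨z, hz, rfl⟩ := exists_mem_pathCylinder_pathShift_eq (hy.trans hx.symm)
    rw [pathCylinder_eq_of_mem hz, ← pathCylinder_add, hμ.measure_pathCylinder,
      hμ.measure_pathCylinder, hν.measure_pathCylinder, if_pos hy, one_mul, Finset.prod_range_add,
      mul_assoc]
    rfl
  · have hempty : pathCylinder n x ∩ pathShift n ⁻¹' pathCylinder m y = ∅ :=
      Set.eq_empty_of_forall_notMem fun ω ⟨hpast, hfuture⟩ => hy <|
        (hfuture 0 m.zero_le).symm.trans ((hpast n le_rfl).trans hx)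
    rw [hempty, measure_empty, hν.measure_pathCylinder, if_neg hy, zero_mul, mul_zero]

variable [Countable S] [MeasurableSingletonClass S]

lemma markov_property (hμ : IsChainLaw P s μ) (hν : IsChainLaw P t ν) (n : ℕ) :
    (μ.restrict {ω | ω n = t}).map (pathShift n) = μ {ω | ω n = t} • ν := by
  have := hμ.isProbabilityMeasure
  refine ext_of_pathCylinder fun m y => ?_
  have hy := measurableSet_pathCylinder m y
  rw [Measure.map_apply (measurable_pathShift n) hy,
    Measure.restrict_apply (measurable_pathShift n hy), Set.inter_comm, Measure.smul_apply,
    smul_eq_mul]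
  exact measure_eval_eq_inter_eq_mul_of_forall_pathCylinder fun x hx =>
    hμ.measure_pathCylinder_inter_pathShift hν hx m y

lemma measure_eval_eq_inter_succ (hμ : IsChainLaw P s μ) (n : ℕ) (w z : S) :
    μ ({ω | ω n = w} ∩ {ω | ω (n + 1) = z}) = μ {ω | ω n = w} * P w z := by
  refine measure_eval_eq_inter_eq_mul_of_forall_pathCylinder fun x hx => ?_
  let y := Function.update x (n + 1) z
  have hy (i) (hi : i ≤ n) : y i = x i := Function.update_of_ne (by lia) _ _
  have hyz : y (n + 1) = z := Function.update_self ..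
  have hsucc := hμ.measure_pathCylinder_succ n y
  rwa [pathCylinder_succ, ← pathCylinder_eq_of_mem hy, hyz, hy n le_rfl, hx] at hsucc

lemma measure_eval_eq (hμ : IsChainLaw P s μ) (n : ℕ) (z : S) :
    μ {ω | ω n = z} = nStep P n s z := by
  induction n generalizing z with
  | zero => simpa [pathCylinder, nStep, eq_comm] using hμ.measure_pathCylinder 0 fun _ => z
  | succ n ih =>
    rw [← tsum_measure_eval_eq_inter μ n, nStep_succ]
    exact tsum_congr fun w => by rw [hμ.measure_eval_eq_inter_succ, ih]

lemma measure_lastVisitAt (hμ : IsChainLaw P s μ) (hν : IsChainLaw P t ν) {C : Set S}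
    (ht : t ∈ C) : μ (lastVisitAt C t) = (∑' n, nStep P n s t) * ν (noReturn C) := by
  have hC := measurableSet_noReturn C.to_countable.measurableSet
  rw [lastVisitAt_eq_iUnion, measure_iUnion (pairwise_disjoint_lastVisit ht) fun n =>
    (measurableSet_eval_eq n t).inter (measurable_pathShift n hC), ← ENNReal.tsum_mul_right]
  refine tsum_congr fun n => ?_
  have hmarkov := DFunLike.congr_fun (hμ.markov_property hν n) (noReturn C)
  rw [Measure.map_apply (measurable_pathShift n) hC,
    Measure.restrict_apply (measurable_pathShift n hC), Set.inter_comm] at hmarkov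
  rw [hmarkov, Measure.smul_apply, smul_eq_mul, hμ.measure_eval_eq]

end IsChainLaw

end MarkovChain

section PairWalk

variable [MeasurableSpace V] {p : V → V → ℝ≥0∞}

lemma IsPairWalkMeasure.isChainLaw {a b : V} {μ : Measure (ℕ → V × V)}
    (hμ : IsPairWalkMeasure p a b μ) : IsChainLaw (prodStep p p) (a, b) μ :=
  ⟨hμ.1, fun n x => (hμ.2 n x).trans (by congr)⟩

variable [Countable V] [DiscreteMeasurableSpace V]

lemma IsPairWalkMeasure.measure_lastCollisionAt {u v : V} {μ ν : Measure (ℕ → V × V)}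
    (hμ : IsPairWalkMeasure p u u μ) (hν : IsPairWalkMeasure p v v ν) :
    μ (lastCollisionAt v) = (∑' n, nStep p n u v ^ 2) * ν noCollision := by
  have hlast := hμ.isChainLaw.measure_lastVisitAt hν.isChainLaw (Set.mem_diagonal v)
  simp only [nStep_prodStep, ← sq] at hlast
  exact hlast

lemma tsum_mul_measure_lastCollisionAt {m : V → ℝ≥0∞} (hrev : ∀ u w, m u * p u w = m w * p w u)
    {μ : V → Measure (ℕ → V × V)} (hμ : ∀ w, IsPairWalkMeasure p w w (μ w)) (v : V) :
    ∑' u, m u * μ u (lastCollisionAt v) =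
      m v * (∑' n, nStep p (2 * n) v v) * μ v noCollision := by
  simp only [fun u => (hμ u).measure_lastCollisionAt (hμ v), ← mul_assoc, ENNReal.tsum_mul_right,
    ← ENNReal.tsum_mul_left]
  rw [ENNReal.tsum_comm]
  simp only [tsum_mul_nStep_sq hrev]

theorem recurrent_mass_diverges_general {m : V → ℝ≥0∞}
    (hrev : ∀ u w, m u * p u w = m w * p w u) {μ : V → Measure (ℕ → V × V)}
    (hμ : ∀ w, IsPairWalkMeasure p w w (μ w)) {v : V} (hm : m v ≠ 0)
    (hrec : ∑' n, nStep p n v v = ∞) (hq : 0 < μ v noCollision) :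
    ∑' u, m u * μ u (lastCollisionAt v) = ∞ := by
  rw [tsum_mul_measure_lastCollisionAt hrev hμ, tsum_nStep_even_eq_top p hrec,
    ENNReal.mul_top hm, ENNReal.top_mul hq.ne']

end PairWalk

section SimpleRandomWalk

variable (G : SimpleGraph V) [G.LocallyFinite]

lemma pn_eq_nStep (n : ℕ) (u v : V) : pn G n u v = nStep (step G) n u v := by
  induction n generalizing u with
  | zero => rfl
  | succ n ih => simp only [pn, nStep, ih]

lemma degree_mul_step (u v : V) :
    (G.degree u : ℝ≥0∞) * step G u v = if G.Adj u v then 1 else 0 := by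
  unfold step
  split_ifs with h
  · have hu : G.degree u ≠ 0 := h.degree_pos_left.ne'
    exact ENNReal.mul_inv_cancel (mod_cast hu) (ENNReal.natCast_ne_top _)
  · exact mul_zero _

lemma degree_mul_step_comm (u v : V) :
    (G.degree u : ℝ≥0∞) * step G u v = G.degree v * step G v u := by
  simp only [degree_mul_step, G.adj_comm]

end SimpleRandomWalk

/-- if `G` is recurrent and `q_0(v) > 0`, then `Σ_u deg(u) · q_last(u, v) = ∞`. -/
theorem recurrent_mass_diverges
    [Countable V] [MeasurableSpace V] [DiscreteMeasurableSpace V]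
    (G : SimpleGraph V) [G.LocallyFinite]
    (hconn : G.Connected) (hdeg : ∀ v : V, 0 < G.degree v)
    (hrec : ∀ w : V, ∑' n : ℕ, pn G n w w = ∞)
    (μ : V → Measure (ℕ → V × V))
    (hμ : ∀ w : V, IsPairWalkMeasure (step G) w w (μ w))
    (v : V) (hq : 0 < μ v noCollision) :
    ∑' u : V, (G.degree u : ℝ≥0∞) * μ u (lastCollisionAt v) = ∞ :=
  recurrent_mass_diverges_general (degree_mul_step_comm G) hμ (mod_cast (hdeg v).ne')
    (by simpa only [pn_eq_nStep] using hrec v) hq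

end CollisionsStmt
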